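/- arXiv:1810.13117 — 3 statements merged into one kernel-verified Lean document; each statement's English description precedes it below -/
import Mathlib

section
/- Let X be a separable Banach space, G : R^N → X be Fréchet-differentiable at 0 ∈ R^N, and f : X → R be Lipschitz in a neighbourhood of G(0). Then for every direction σ ∈ R^N there exists ξ ∈ ∂_MP f(G(0)) such that d_MP (f ∘ G)(0;σ) = ⟨ξ, DG(0)σ⟩; in particular ∂_MP (f ∘ G)(0) ⊆ DG(0)* ∘ ∂_MP f(G(0)). -/
/-!
The Michel-Penot derivative `mpDeriv f x` is sublinear if it never takes the value `⊤`: subadditivity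
comes from inserting the intermediate base direction `e + h`, which is the purpose of the supremum over
`e` (`isSublinear_mpDeriv`). If `f` is Lipschitz near `G 0`, then `f (G (t • v))` and
`f (G 0 + t • DG v)` differ by `o(t)`, so `mpDeriv (f ∘ G) 0 ≤ mpDeriv f (G 0) ∘ DG`
(`mpDeriv_comp_le`); this is only an inequality, since on the left the base directions are
restricted to the range of `DG`.

Hence an element `L` of the subdifferential of `f ∘ G` is a linear form dominated by
`mpDeriv f (G 0) ∘ DG`. It factors through the range of `DG`, and the Hahn-Banach theorem extends
it to a linear form `ξ` dominated by `mpDeriv f (G 0)` (`IsSublinear.exists_comp_eq`). This is the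
inclusion. The existence statement follows from it, because Hahn-Banach also gives, for each `σ`,
an `L` in the subdifferential of `f ∘ G` which attains `mpDeriv (f ∘ G) 0 σ` at `σ`
(`IsSublinear.exists_eq_at`).
-/

open MeasureTheory Filter Topology Set Metric Pointwise

noncomputable section

namespace PMPW

variable {X : Type*} [NormedAddCommGroup X] [NormedSpace ℝ X]

/-- The Michel-Penot derivative of `f` at `x` in the direction `h`:
`d_MP f(x;h) = sup_{e ∈ X} limsup_{t ↓ 0} [f(x+t(e+h)) - f(x+te)]/t`, with values in `EReal`. -/
def mpDeriv (f : X → ℝ) (x h : X) : EReal :=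
  ⨆ e : X, Filter.limsup
    (fun t : ℝ => (((f (x + t • (e + h)) - f (x + t • e)) / t : ℝ) : EReal))
    (nhdsWithin (0:ℝ) (Set.Ioi 0))

/-- The Michel-Penot subdifferential of `f` at `x`. -/
def mpSubdiff (f : X → ℝ) (x : X) : Set (X →L[ℝ] ℝ) :=
  {ξ | ∀ h : X, ((ξ h : ℝ) : EReal) ≤ mpDeriv f x h}

/-- A map is calm at `x` : locally Lipschitz-bounded increments at `x` and finite
Michel-Penot derivatives in every direction. -/
def Calm (f : X → ℝ) (x : X) : Prop :=
  (∃ L > (0:ℝ), ∀ᶠ δ in nhds (0:X), |f (x + δ) - f x| ≤ L * ‖δ‖) ∧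
  ∀ h : X, mpDeriv f x h < ⊤

/-- The normal cone of convex analysis to `Ω` at `x`. -/
def normalCone (Ω : Set X) (x : X) : Set (X →L[ℝ] ℝ) :=
  {ξ | ∀ y ∈ Ω, ξ (y - x) ≤ 0}

end PMPW

namespace PMPW

/-- A real-valued function that is positively homogeneous and subadditive. -/
structure IsSublinear {E : Type*} [AddCommGroup E] [Module ℝ E] (p : E → ℝ) : Prop where
  hom : ∀ s : ℝ, 0 < s → ∀ x, p (s • x) = s * p x
  add : ∀ x y, p (x + y) ≤ p x + p y

theorem IsSublinear.map_zero {E : Type*} [AddCommGroup E] [Module ℝ E] {p : E → ℝ}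
    (hp : IsSublinear p) : p 0 = 0 := by
  have := hp.hom 2 two_pos 0
  rw [smul_zero] at this
  linarith

/-- Hahn-Banach through a linear map: a linear form dominated by `p ∘ T` vanishes on `ker T`, hence
descends to the range of `T`, and extends from there to a linear form dominated by `p`. -/
theorem IsSublinear.exists_comp_eq {E V : Type*} [AddCommGroup E] [Module ℝ E] [AddCommGroup V]
    [Module ℝ V] {p : E → ℝ} (hp : IsSublinear p) (T : V →ₗ[ℝ] E) (L : V →ₗ[ℝ] ℝ)
    (hL : ∀ v, L v ≤ p (T v)) :
    ∃ g : E →ₗ[ℝ] ℝ, (∀ v, g (T v) = L v) ∧ ∀ x, g x ≤ p x := by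
  have hker : ∀ v, T v = 0 → L v = 0 := by
    intro v hv
    have h1 := hL v
    have h2 := hL (-v)
    rw [hv, hp.map_zero] at h1
    rw [_root_.map_neg, _root_.map_neg, hv, neg_zero, hp.map_zero] at h2
    linarith
  obtain ⟨s, hs⟩ := T.rangeRestrict.exists_rightInverse_of_surjective T.range_rangeRestrict
  have hTs : ∀ y : LinearMap.range T, T (s y) = y := fun y =>
    congrArg Subtype.val (LinearMap.congr_fun hs y)
  obtain ⟨g, hg, hgp⟩ := exists_extension_of_le_sublinear
    (⟨LinearMap.range T, L ∘ₗ s⟩ : E →ₗ.[ℝ] ℝ) p hp.hom hp.add (by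
      intro y
      have := hL (s y)
      rw [hTs y] at this
      exact this)
  refine ⟨g, fun v => ?_, hgp⟩
  have h1 : g (T v) = L (s ⟨T v, v, rfl⟩) := hg ⟨T v, v, rfl⟩
  have h2 := hker (s ⟨T v, v, rfl⟩ - v) (by rw [_root_.map_sub, hTs, sub_self])
  rw [_root_.map_sub] at h2
  linarith

/-- Hahn-Banach from the line spanned by `σ`, where `t • σ ↦ t * p σ` is dominated by `p`. -/
theorem IsSublinear.exists_eq_at {E : Type*} [AddCommGroup E] [Module ℝ E] {p : E → ℝ}
    (hp : IsSublinear p) (σ : E) : ∃ g : E →ₗ[ℝ] ℝ, g σ = p σ ∧ ∀ x, g x ≤ p x := by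
  obtain ⟨g, hg, hgp⟩ := hp.exists_comp_eq (LinearMap.toSpanSingleton ℝ E σ)
    (LinearMap.toSpanSingleton ℝ ℝ (p σ)) (by
      intro t
      simp only [LinearMap.toSpanSingleton_apply, smul_eq_mul]
      rcases lt_trichotomy t 0 with ht | rfl | ht
      · have h1 := hp.add (t • σ) ((-t) • σ)
        rw [hp.hom (-t) (by linarith), ← add_smul, add_neg_cancel, zero_smul, hp.map_zero] at h1
        linarith
      · simp [hp.map_zero]
      · rw [hp.hom t ht])
  exact ⟨g, by simpa using hg 1, hgp⟩

section

variable {Y : Type*} [NormedAddCommGroup Y] [NormedSpace ℝ Y]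

/-- Real upper bounds of the Michel-Penot derivative, free of `EReal` and of division. -/
theorem mpDeriv_le_iff (f : Y → ℝ) (x h : Y) (M : ℝ) :
    mpDeriv f x h ≤ (M : EReal) ↔ ∀ e : Y, ∀ ε > (0 : ℝ), ∀ᶠ t in 𝓝[>] (0 : ℝ),
      f (x + t • (e + h)) - f (x + t • e) ≤ (M + ε) * t := by
  unfold mpDeriv
  rw [iSup_le_iff]
  refine forall_congr' fun e => ⟨fun H ε hε => ?_, fun H => ?_⟩
  · have h1 := Filter.eventually_lt_of_limsup_lt
      (lt_of_le_of_lt H (EReal.coe_lt_coe_iff.2 (by linarith : M < M + ε)))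
    filter_upwards [h1, self_mem_nhdsWithin] with t ht ht0
    exact (div_le_iff₀ ht0).1 (EReal.coe_lt_coe_iff.1 ht).le
  · refine EReal.le_of_forall_lt_iff_le.1 fun z hz => ?_
    have hz' : M < z := EReal.coe_lt_coe_iff.1 hz
    refine Filter.limsup_le_of_le (by isBoundedDefault) ?_
    filter_upwards [H (z - M) (by linarith), self_mem_nhdsWithin] with t ht ht0
    refine EReal.coe_le_coe_iff.2 ((div_le_iff₀ ht0).2 ?_)
    linarith

theorem mpDeriv_zero (f : Y → ℝ) (x : Y) : mpDeriv f x 0 = 0 := by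
  simp [mpDeriv]

theorem mpDeriv_add_le {f : Y → ℝ} {x h k : Y} {a b : ℝ} (ha : mpDeriv f x h ≤ (a : EReal))
    (hb : mpDeriv f x k ≤ (b : EReal)) : mpDeriv f x (h + k) ≤ ((a + b : ℝ) : EReal) := by
  rw [mpDeriv_le_iff] at *
  intro e ε hε
  filter_upwards [ha e (ε / 2) (by linarith), hb (e + h) (ε / 2) (by linarith)] with t h1 h2
  -- `e + h` is the base direction for the increment along `k`.
  rw [← add_assoc]
  linarith

theorem mpDeriv_smul_le {f : Y → ℝ} {x h : Y} {a s : ℝ} (hs : 0 < s)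
    (ha : mpDeriv f x h ≤ (a : EReal)) : mpDeriv f x (s • h) ≤ ((s * a : ℝ) : EReal) := by
  rw [mpDeriv_le_iff] at *
  intro e ε hε
  have hlim : Tendsto (fun t : ℝ => t * s) (𝓝[>] 0) (𝓝[>] 0) := by
    refine tendsto_nhdsWithin_iff.2 ⟨?_, ?_⟩
    · have : Tendsto (fun t : ℝ => t * s) (𝓝 0) (𝓝 (0 * s)) := tendsto_id.mul_const s
      rw [zero_mul] at this
      exact this.mono_left nhdsWithin_le_nhds
    · filter_upwards [self_mem_nhdsWithin] with t ht
      exact mul_pos ht hs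
  -- The substitution `t ↦ t * s`, `e ↦ s⁻¹ • e` turns quotients for `h` into quotients for `s • h`.
  filter_upwards [hlim.eventually (ha (s⁻¹ • e) (ε / s) (by positivity))] with t ht
  rw [smul_add, smul_smul, mul_assoc, mul_inv_cancel₀ hs.ne', mul_one, mul_smul, ← smul_add] at ht
  calc _ ≤ _ := ht
    _ = _ := by field_simp

/-- Subadditivity and `mpDeriv f x 0 = 0` exclude the value `⊥` as soon as `⊤` is excluded. -/
theorem coe_toReal_mpDeriv {f : Y → ℝ} {x : Y} (hf : ∀ h, mpDeriv f x h ≠ ⊤) (h : Y) :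
    ((mpDeriv f x h).toReal : EReal) = mpDeriv f x h := by
  refine EReal.coe_toReal (hf h) fun hbot => ?_
  have h1 : mpDeriv f x h ≤ ((-(mpDeriv f x (-h)).toReal - 1 : ℝ) : EReal) := by
    rw [hbot]; exact bot_le
  have h2 := mpDeriv_add_le h1 (EReal.le_coe_toReal (hf (-h)))
  rw [add_neg_cancel, mpDeriv_zero, ← EReal.coe_zero, EReal.coe_le_coe_iff] at h2
  linarith

theorem isSublinear_mpDeriv {f : Y → ℝ} {x : Y} (hf : ∀ h, mpDeriv f x h ≠ ⊤) :
    IsSublinear fun h => (mpDeriv f x h).toReal := by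
  have hle : ∀ s : ℝ, 0 < s → ∀ h,
      (mpDeriv f x (s • h)).toReal ≤ s * (mpDeriv f x h).toReal := by
    intro s hs h
    rw [← EReal.coe_le_coe_iff, coe_toReal_mpDeriv hf]
    exact mpDeriv_smul_le hs (coe_toReal_mpDeriv hf h).ge
  refine ⟨fun s hs h => le_antisymm (hle s hs h) ?_, fun h k => ?_⟩
  · have := hle s⁻¹ (inv_pos.2 hs) (s • h)
    rw [smul_smul, inv_mul_cancel₀ hs.ne', one_smul] at this
    calc _ ≤ s * (s⁻¹ * (mpDeriv f x (s • h)).toReal) := by gcongr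
      _ = _ := by field_simp
  · rw [← EReal.coe_le_coe_iff, coe_toReal_mpDeriv hf]
    exact mpDeriv_add_le (coe_toReal_mpDeriv hf h).ge (coe_toReal_mpDeriv hf k).ge

theorem tendsto_add_smul (x v : Y) :
    Tendsto (fun t : ℝ => x + t • v) (𝓝[>] 0) (𝓝 x) := by
  have h : Continuous fun t : ℝ => x + t • v := by fun_prop
  have h0 := h.tendsto 0
  rw [zero_smul, add_zero] at h0
  exact h0.mono_left nhdsWithin_le_nhds

theorem mpDeriv_le_of_lipschitz {f : Y → ℝ} {x : Y} {c : NNReal} {U : Set Y} (hU : U ∈ 𝓝 x)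
    (hf : LipschitzOnWith c f U) (h : Y) : mpDeriv f x h ≤ ((c * ‖h‖ : ℝ) : EReal) := by
  rw [mpDeriv_le_iff]
  intro e ε hε
  filter_upwards [tendsto_add_smul x (e + h) hU, tendsto_add_smul x e hU,
    self_mem_nhdsWithin] with t h1 h2 ht
  have ht0 : (0 : ℝ) < t := ht
  have h3 := hf.dist_le_mul _ h1 _ h2
  rw [Real.dist_eq, dist_eq_norm] at h3
  have h4 : x + t • (e + h) - (x + t • e) = t • h := by rw [smul_add]; abel
  rw [h4, norm_smul, Real.norm_of_nonneg ht0.le] at h3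
  have h5 := (le_abs_self _).trans h3
  nlinarith [mul_pos hε ht0]

/-- Replacing `G` by its first-order expansion changes `f ∘ G` by `o(t)` along rays. -/
theorem eventually_abs_comp_sub_le {V : Type*} [NormedAddCommGroup V] [NormedSpace ℝ V]
    {G : V → Y} {DG : V →L[ℝ] Y} (hG : HasFDerivAt G DG 0) {f : Y → ℝ} {c : NNReal} {U : Set Y}
    (hU : U ∈ 𝓝 (G 0)) (hf : LipschitzOnWith c f U) (v : V) {ε : ℝ} (hε : 0 < ε) :
    ∀ᶠ t in 𝓝[>] (0 : ℝ), |f (G (0 + t • v)) - f (G 0 + t • DG v)| ≤ ε * t := by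
  have hv := tendsto_add_smul (0 : V) v
  -- The factors `c + 1` and `‖v‖ + 1` keep the constant meaningful for `c = 0` or `v = 0`.
  have hη : 0 < ε / (((c : ℝ) + 1) * (‖v‖ + 1)) := by positivity
  have hlo := hv.eventually (hG.isLittleO.def hη)
  filter_upwards [hlo, (hG.continuousAt.tendsto.comp hv) hU,
    tendsto_add_smul (G 0) (DG v) hU, self_mem_nhdsWithin] with t h1 h2 h3 ht
  have ht0 : (0 : ℝ) < t := ht
  have h4 := hf.dist_le_mul _ h2 _ h3
  rw [Real.dist_eq, dist_eq_norm] at h4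
  simp only [zero_add, sub_zero, _root_.map_smul, norm_smul, Real.norm_of_nonneg ht0.le,
    Function.comp_apply, ← sub_sub] at h1 h4 ⊢
  calc _ ≤ _ := h4
    _ ≤ ((c : ℝ) + 1) * (ε / (((c : ℝ) + 1) * (‖v‖ + 1)) * (t * (‖v‖ + 1))) := by
      gcongr
      · linarith
      · refine h1.trans ?_
        gcongr
        linarith
    _ = ε * t := by field_simp

theorem mpDeriv_comp_le {V : Type*} [NormedAddCommGroup V] [NormedSpace ℝ V]
    {G : V → Y} {DG : V →L[ℝ] Y} (hG : HasFDerivAt G DG 0) {f : Y → ℝ} {c : NNReal} {U : Set Y}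
    (hU : U ∈ 𝓝 (G 0)) (hf : LipschitzOnWith c f U) (σ : V) :
    mpDeriv (fun e => f (G e)) 0 σ ≤ mpDeriv f (G 0) (DG σ) := by
  refine EReal.le_of_forall_lt_iff_le.1 fun z hz => ?_
  have hz' := (mpDeriv_le_iff _ _ _ _).1 hz.le
  rw [mpDeriv_le_iff]
  intro e ε hε
  have hε3 : 0 < ε / 3 := by linarith
  filter_upwards [hz' (DG e) (ε / 3) hε3, eventually_abs_comp_sub_le hG hU hf (e + σ) hε3,
    eventually_abs_comp_sub_le hG hU hf e hε3] with t h1 h2 h3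
  rw [_root_.map_add] at h2
  have h4 := (abs_le.1 h2).2
  have h5 := (abs_le.1 h3).1
  linarith

end

/-- Proposition 2.12-(c) : chain rule for Michel-Penot subdifferentials.
If `G : ℝ^N → X` is Fréchet-differentiable at `0` and `f` is Lipschitz near `G 0`, then for
every direction `σ` there is `ξ ∈ ∂_MP f(G 0)` with `d_MP (f ∘ G)(0;σ) = ⟨ξ, DG(0)σ⟩`; in
particular `∂_MP (f ∘ G)(0) ⊆ DG(0)* ∘ ∂_MP f(G 0)`. -/
theorem mpDeriv_comp {X : Type*} [NormedAddCommGroup X] [NormedSpace ℝ X]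
    [CompleteSpace X] [TopologicalSpace.SeparableSpace X] {N : ℕ}
    (G : (Fin N → ℝ) → X) (DG : (Fin N → ℝ) →L[ℝ] X) (hG : HasFDerivAt G DG 0)
    (f : X → ℝ) (c : NNReal) (U : Set X) (hU : U ∈ nhds (G 0))
    (hf : LipschitzOnWith c f U) :
    (∀ σ : Fin N → ℝ, ∃ ξ ∈ mpSubdiff f (G 0),
        mpDeriv (fun e => f (G e)) 0 σ = ((ξ (DG σ) : ℝ) : EReal)) ∧
    mpSubdiff (fun e => f (G e)) 0 ⊆ {L | ∃ ξ ∈ mpSubdiff f (G 0), L = ξ.comp DG} := by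
  have hf_top : ∀ h, mpDeriv f (G 0) h ≠ ⊤ := fun h =>
    ne_top_of_le_ne_top (EReal.coe_ne_top _) (mpDeriv_le_of_lipschitz hU hf h)
  have hg_top : ∀ σ, mpDeriv (fun e => f (G e)) 0 σ ≠ ⊤ := fun σ =>
    ne_top_of_le_ne_top (hf_top (DG σ)) (mpDeriv_comp_le hG hU hf σ)
  have hincl : mpSubdiff (fun e => f (G e)) 0 ⊆
      {L | ∃ ξ ∈ mpSubdiff f (G 0), L = ξ.comp DG} := by
    intro L hL
    obtain ⟨g, hgL, hgp⟩ := (isSublinear_mpDeriv hf_top).exists_comp_eq DG.toLinearMap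
      L.toLinearMap (by
        intro v
        rw [← EReal.coe_le_coe_iff, coe_toReal_mpDeriv hf_top]
        exact (hL v).trans (mpDeriv_comp_le hG hU hf v))
    have hgd : ∀ x, ((g x : ℝ) : EReal) ≤ mpDeriv f (G 0) x := by
      intro x
      rw [← coe_toReal_mpDeriv hf_top]
      exact EReal.coe_le_coe_iff.2 (hgp x)
    have hgc : ∀ x, g x ≤ c * ‖x‖ := fun x =>
      EReal.coe_le_coe_iff.1 ((hgd x).trans (mpDeriv_le_of_lipschitz hU hf x))
    refine ⟨g.mkContinuous c fun x => ?_, hgd, ?_⟩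
    · have h1 := hgc (-x)
      rw [_root_.map_neg, norm_neg] at h1
      exact abs_le.2 ⟨by linarith, hgc x⟩
    · ext1 v
      exact (hgL v).symm
  refine ⟨fun σ => ?_, hincl⟩
  obtain ⟨g, hgσ, hgp⟩ := (isSublinear_mpDeriv hg_top).exists_eq_at σ
  have hmem : LinearMap.toContinuousLinearMap g ∈ mpSubdiff (fun e => f (G e)) 0 := by
    intro h
    rw [← coe_toReal_mpDeriv hg_top]
    exact EReal.coe_le_coe_iff.2 (hgp h)
  obtain ⟨ξ, hξ, hξg⟩ := hincl hmem
  refine ⟨ξ, hξ, ?_⟩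
  have h1 : g σ = ξ (DG σ) := DFunLike.congr_fun hξg σ
  rw [← h1, hgσ, coe_toReal_mpDeriv hg_top]

end PMPW
end
end

section
/- Let X be a separable Banach space, f : [0,T] → X be integrable in the sense of Bochner, and T' ⊆ [0,T] be any subset of full Lebesgue measure. Then there exist subsets A, M ⊆ T', with A of null Lebesgue measure and M of full Lebesgue measure, such that for every τ ∈ M there exists a sequence (τ_k) ⊂ A with τ_k → τ and ‖f(τ) − f(τ_k)‖_X → 0 as k → +∞. -/
/-!
Since `ℝ × X` is a separable metric space, so is the graph of `f` over `T'`: it has a countable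
dense subset `D`. The projection `A` of `D` to the time axis is countable, hence null, and a
sequence in `D` that tends to `(τ, f τ)` is exactly a sequence of times `τ_k → τ` in `A` with
`f τ_k → f τ`. Thus `M = T'` works.
-/

open MeasureTheory Filter Topology Set

noncomputable section

namespace PMPW

/-- Lemma 2.15 : pointwise convergence and restriction.
If `f : [0,T] → X` is Bochner-integrable and `T' ⊆ [0,T]` has full Lebesgue measure, then
there are `A, M ⊆ T'`, respectively Lebesgue-null and of full Lebesgue measure in `[0,T]`,
such that every `τ ∈ M` is the limit of a sequence `(τ_k) ⊆ A` with `‖f(τ) - f(τ_k)‖ → 0`. -/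
theorem pointwise_convergence_restriction
    {X : Type*} [NormedAddCommGroup X] [NormedSpace ℝ X] [CompleteSpace X]
    [TopologicalSpace.SeparableSpace X]
    (T : ℝ) (hT : 0 < T) (f : ℝ → X)
    (hf : IntegrableOn f (Set.Icc 0 T) volume)
    (T' : Set ℝ) (hT'sub : T' ⊆ Set.Icc 0 T)
    (hT'full : volume (Set.Icc 0 T \ T') = 0) :
    ∃ A M : Set ℝ, A ⊆ T' ∧ M ⊆ T' ∧
      volume A = 0 ∧ volume (Set.Icc 0 T \ M) = 0 ∧
      ∀ τ ∈ M, ∃ τs : ℕ → ℝ, (∀ k, τs k ∈ A) ∧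
        Tendsto τs atTop (nhds τ) ∧
        Tendsto (fun k => ‖f τ - f (τs k)‖) atTop (nhds 0) := by
  obtain ⟨D, hDsub, hDcount, hDdense⟩ :=
    (TopologicalSpace.IsSeparable.of_separableSpace
      ((fun t => (t, f t)) '' T' : Set (ℝ × X))).exists_countable_dense_subset
  refine ⟨Prod.fst '' D, T', ?_, subset_rfl, (hDcount.image _).measure_zero _, hT'full, ?_⟩
  · rintro _ ⟨p, hp, rfl⟩
    obtain ⟨t, ht, rfl⟩ := hDsub hp
    exact ht
  · intro τ hτ
    obtain ⟨p, hpD, hp⟩ := mem_closure_iff_seq_limit.1 (hDdense (mem_image_of_mem _ hτ))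
    have hval : ∀ k, (p k).2 = f (p k).1 := fun k => by
      obtain ⟨t, _, ht⟩ := hDsub (hpD k)
      rw [← ht]
    refine ⟨fun k => (p k).1, fun k => ⟨p k, hpD k, rfl⟩,
      (continuous_fst.tendsto _).comp hp, ?_⟩
    have h2 : Tendsto (fun k => f (p k).1) atTop (𝓝 (f τ)) := by
      simpa only [Function.comp_def, hval] using (continuous_snd.tendsto _).comp hp
    simpa using (h2.const_sub (f τ)).norm

end PMPW
end
end

section
/- Let X be a separable Banach space, ε > 0, and f : [0,ε]^N → X be a continuous map that is differentiable at e = 0 relatively to R^N₊ (i.e. f(e) − f(0) = D_e f(0)e + o(|e|) as e → 0 within [0,ε]^N, for some bounded linear map D_e f(0) : R^N → X). Then there exists ε̄ > 0 and a continuous extension f̃ : [−ε̄, ε̄]^N → X of f which is Fréchet-differentiable at e = 0 with D_e f̃(0) = D_e f(0). -/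
/-! The extension is `e ↦ f (e⁺) + D (e - e⁺)`, where `e⁺` is the coordinatewise positive part.
It is continuous on `[-ε, ε]^N`, and it equals `f` on the orthant, where `e⁺ = e`. Its first-order
remainder at `e` is exactly the remainder of `f` at `e⁺`, which is `o(‖e⁺‖)` and hence `o(‖e‖)`
because `‖e⁺‖ ≤ ‖e‖`. -/

open MeasureTheory Filter Topology Set

noncomputable section

namespace PMPW

/-- Lemma 2.16 : continuous extension preserving the derivative.
If `f : [0,ε]^N → X` is continuous and differentiable at `e = 0` relatively to the nonnegative
orthant, with derivative `D`, then for some `ε̄ > 0` it admits a continuous extension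
`f̃ : [-ε̄,ε̄]^N → X` which is Fréchet-differentiable at `e = 0` with `D f̃(0) = D f(0) = D`. -/
theorem continuous_extension_preserving_derivative
    {X : Type*} [NormedAddCommGroup X] [NormedSpace ℝ X] [CompleteSpace X]
    [TopologicalSpace.SeparableSpace X] {N : ℕ}
    (ε : ℝ) (hε : 0 < ε) (f : (Fin N → ℝ) → X)
    (hfc : ContinuousOn f {e | ∀ i, e i ∈ Set.Icc 0 ε})
    (D : (Fin N → ℝ) →L[ℝ] X)
    (hdiff : (fun e => f e - f 0 - D e)
      =o[nhdsWithin 0 {e : Fin N → ℝ | ∀ i, e i ∈ Set.Icc 0 ε}] (fun e => e)) :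
    ∃ εb > (0:ℝ), ∃ ftilde : (Fin N → ℝ) → X,
      ContinuousOn ftilde {e | ∀ i, e i ∈ Set.Icc (-εb) εb} ∧
      (∀ e : Fin N → ℝ, (∀ i, e i ∈ Set.Icc 0 ε) → (∀ i, e i ∈ Set.Icc (-εb) εb) →
        ftilde e = f e) ∧
      HasFDerivWithinAt ftilde D {e | ∀ i, e i ∈ Set.Icc (-εb) εb} 0 := by
  -- `P` replaces each coordinate by its positive part, retracting the cube onto the orthant.
  set P : (Fin N → ℝ) → (Fin N → ℝ) := fun e i => max (e i) 0 with hP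
  have hPc : Continuous P := by fun_prop
  have hP0 : P 0 = 0 := by ext i; simp [hP]
  have hPmaps : MapsTo P {e | ∀ i, e i ∈ Set.Icc (-ε) ε} {e | ∀ i, e i ∈ Set.Icc 0 ε} :=
    fun e he i => ⟨le_max_right _ _, max_le (he i).2 hε.le⟩
  have hPnorm : ∀ e, ‖P e‖ ≤ ‖e‖ := by
    intro e
    refine (pi_norm_le_iff_of_nonneg (norm_nonneg e)).2 fun i => ?_
    refine le_trans ?_ (norm_le_pi_norm e i)
    simp only [hP, Real.norm_eq_abs]
    rw [abs_of_nonneg (le_max_right _ _)]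
    exact max_le (le_abs_self _) (abs_nonneg _)
  refine ⟨ε, hε, fun e => f (P e) + D (e - P e), ?_, ?_, ?_⟩
  · exact (hfc.comp hPc.continuousOn hPmaps).add (by fun_prop)
  · intro e he _
    have h : P e = e := by ext i; exact max_eq_left (he i).1
    simp [h]
  · rw [hasFDerivWithinAt_iff_isLittleO]
    have ht : Tendsto P (𝓝[{e | ∀ i, e i ∈ Set.Icc (-ε) ε}] 0)
        (𝓝[{e | ∀ i, e i ∈ Set.Icc 0 ε}] 0) := by
      have := hPc.continuousWithinAt.tendsto_nhdsWithin hPmaps (x := 0)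
      rwa [hP0] at this
    have h := (hdiff.comp_tendsto ht).trans_isBigO
      (Asymptotics.isBigO_of_le _ (g := fun e => e) hPnorm)
    refine (h.congr_left fun e => ?_).congr_right fun e => (sub_zero e).symm
    simp only [Function.comp_apply, hP0, map_sub, sub_zero, map_zero, add_zero]
    abel

end PMPW
end
end
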